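/- Let ε, p ∈ (0,1] be constants and let x = (x₁, x₂, u) be a configuration with x₁ ∈ [ε·n, x₂] and u ≤ n/2, and set p_s = 1 − x₁/x₂. There exist constants c, C > 0 (depending only on ε and p) such that whenever |p − p_s| ≤ c·√(log n / n), the chain USD_p started from x satisfies Pr[T ≤ C·n·log² n] ≥ 1 − C·n^{-1}, where T = inf{t ≥ 0 : X₁(t) = n or X₂(t) = n} is the first time all agents agree on one of the two opinions. -/

import Mathlib

open MeasureTheory

/-- The one-step transition probability of the stubborn undecided-state dynamics `USD_p`
with `n` agents, from configuration `c = (x₁, x₂, u)` to configuration `d`. -/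
noncomputable def usdStep (n : ℕ) (p : ℝ) (c d : ℕ × ℕ × ℕ) : ℝ :=
  (if d = (c.1 - 1, c.2.1, c.2.2 + 1) then (1 - p) * (c.1 : ℝ) * (c.2.1 : ℝ) / (n : ℝ) ^ 2 else 0) +
  (if d = (c.1, c.2.1 - 1, c.2.2 + 1) then (c.1 : ℝ) * (c.2.1 : ℝ) / (n : ℝ) ^ 2 else 0) +
  (if d = (c.1 + 1, c.2.1, c.2.2 - 1) then (c.2.2 : ℝ) * (c.1 : ℝ) / (n : ℝ) ^ 2 else 0) +
  (if d = (c.1, c.2.1 + 1, c.2.2 - 1) then (c.2.2 : ℝ) * (c.2.1 : ℝ) / (n : ℝ) ^ 2 else 0) +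
  (if d = c then
    1 - ((2 - p) * (c.1 : ℝ) * (c.2.1 : ℝ) + (c.2.2 : ℝ) * ((c.1 : ℝ) + (c.2.1 : ℝ))) / (n : ℝ) ^ 2
  else 0)

/-- `μ` is the law of the trajectory `(X(t))_{t ≥ 0}` of `USD_p` with `n` agents started
from the configuration `x0`: it is a probability measure on paths whose finite-dimensional
cylinder probabilities are the products of the one-step transition probabilities. -/
def IsUSD (n : ℕ) (p : ℝ) (x0 : ℕ × ℕ × ℕ) (μ : Measure (ℕ → ℕ × ℕ × ℕ)) : Prop :=
  IsProbabilityMeasure μ ∧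
  ∀ (t : ℕ) (seq : ℕ → ℕ × ℕ × ℕ),
    (μ {ω | ∀ i ≤ t, ω i = seq i}).toReal =
      (if seq 0 = x0 then (1 : ℝ) else 0) *
        ∏ i ∈ Finset.range t, usdStep n p (seq i) (seq (i + 1))

/-- The weighted bias `Δ_w = x₁ - (1 - p)·x₂` of a configuration. -/
noncomputable def dw (p : ℝ) (c : ℕ × ℕ × ℕ) : ℝ := (c.1 : ℝ) - (1 - p) * (c.2.1 : ℝ)


lemma G_step (N D j g h : ℝ) (hN : 1 ≤ N) (hj : |j| ≤ 1) (hg : 0 < g) (hh : 0 < h)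
    (hg2 : g ^ 2 = D ^ 2 + N) (hh2 : h ^ 2 = (D + j) ^ 2 + N) :
    D * j / g + j ^ 2 * N / (16 * g ^ 3) ≤ h - g ∧ |h - g| ≤ |j| := by
  have hg1 : 1 ≤ g := by nlinarith [sq_nonneg D]
  have hDg : |D| ≤ g := abs_le_of_sq_le_sq (by linarith) hg.le
  have hDh : |D + j| ≤ h := abs_le_of_sq_le_sq (by linarith) hh.le
  have hj2 : j ^ 2 ≤ 1 := by rw [← sq_abs]; nlinarith [abs_nonneg j]
  have hNg : N ≤ g ^ 2 := by nlinarith [sq_nonneg D]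
  constructor
  · set e := j ^ 2 * N / (16 * g ^ 3) with he
    have he0 : 0 ≤ e := by positivity
    have heq : e * (16 * g ^ 3) = j ^ 2 * N := by rw [he]; field_simp
    set k := D * j / g with hk
    have hkg : k * g = D * j := by rw [hk]; field_simp
    have hk1 : |k| ≤ 1 := by
      rw [hk, abs_div, abs_mul, abs_of_pos hg, div_le_one hg]
      nlinarith [abs_nonneg D, abs_nonneg j]
    have hk1' := abs_le.mp hk1
    have key : (g + k + e) ^ 2 ≤ h ^ 2 := by
      have e1 : h ^ 2 = g ^ 2 + 2 * (k * g) + j ^ 2 := by rw [hh2, hg2, hkg]; ring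
      rw [e1]
      have hk2 : (j ^ 2 - k ^ 2) * g ^ 2 = j ^ 2 * N := by
        have : k ^ 2 * g ^ 2 = D ^ 2 * j ^ 2 := by rw [← mul_pow, hkg]; ring
        rw [sub_mul, this, hg2]; ring
      have h3 : e * (16 * g) = j ^ 2 - k ^ 2 := by
        have : (e * (16 * g)) * g ^ 2 = (j ^ 2 - k ^ 2) * g ^ 2 := by rw [hk2, ← heq]; ring
        exact mul_right_cancel₀ (by positivity) this
      have he1 : e ≤ 1 := by nlinarith [sq_nonneg k]
      nlinarith [mul_nonneg he0 hg.le, mul_nonneg he0 (by linarith : (0:ℝ) ≤ 1 - k), mul_nonneg he0 (sub_nonneg.mpr hg1), mul_nonneg he0 (sub_nonneg.mpr he1)]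
    have := abs_le_of_sq_le_sq key hh.le
    linarith [le_abs_self (g + k + e)]
  · have h1 : (h - g) * (h + g) = j * ((D + j) + D) := by nlinarith
    have h2 : |h - g| * (h + g) = |j| * |(D + j) + D| := by
      rw [← abs_mul, ← h1, abs_mul, abs_of_pos (by linarith : 0 < h + g)]
    have h3 : |(D + j) + D| ≤ h + g := (abs_add_le _ _).trans (by linarith)
    have : |h - g| * (h + g) ≤ |j| * (h + g) := by
      rw [h2]; exact mul_le_mul_of_nonneg_left h3 (abs_nonneg _)
    exact le_of_mul_le_mul_right this (by linarith)

lemma log_lower (x : ℝ) (hx : -(1/2) ≤ x) : x - 2 * x ^ 2 ≤ Real.log (1 + x) := by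
  have h := Real.one_sub_inv_le_log_of_pos (by linarith : (0:ℝ) < 1 + x)
  refine le_trans ?_ h
  have : 1 - (1 + x)⁻¹ - (x - 2 * x ^ 2) = x ^ 2 * (1 + 2 * x) / (1 + x) := by
    have : (1 + x) ≠ 0 := by linarith
    field_simp; ring
  have h2 : 0 ≤ x ^ 2 * (1 + 2 * x) / (1 + x) :=
    div_nonneg (mul_nonneg (sq_nonneg _) (by linarith)) (by linarith)
  linarith

noncomputable def GG (N D : ℝ) : ℝ := Real.sqrt (D ^ 2 + N)

noncomputable def HH (K N D : ℝ) : ℝ := K * Real.sqrt N + GG N D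

lemma GG_pos {N : ℝ} (hN : 1 ≤ N) (D : ℝ) : 0 < GG N D := Real.sqrt_pos.mpr (by positivity)
lemma GG_sq {N : ℝ} (hN : 1 ≤ N) (D : ℝ) : GG N D ^ 2 = D ^ 2 + N := Real.sq_sqrt (by positivity)

lemma F1_step (K N D j : ℝ) (hN : 1 ≤ N) (hK : 2 ≤ K) (hj : |j| ≤ 1) :
    -Real.log (HH K N (D + j)) - -Real.log (HH K N D) ≤
      -((D * j / GG N D + j ^ 2 * N / (16 * GG N D ^ 3)) / HH K N D) + 2 * j ^ 2 / HH K N D ^ 2 := by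
  have hg := GG_pos hN D
  have hh := GG_pos hN (D + j)
  obtain ⟨h1, h2⟩ := G_step N D j _ _ hN hj hg hh (GG_sq hN D) (GG_sq hN (D+j))
  have hs : 1 ≤ Real.sqrt N := Real.one_le_sqrt.mpr hN
  have hH : 2 ≤ HH K N D := by unfold HH; nlinarith
  have hH' : 0 < HH K N (D + j) := by unfold HH; nlinarith
  set H := HH K N D with hHd
  set x := (GG N (D+j) - GG N D) / H with hx
  have hxe : 1 + x = HH K N (D + j) / H := by
    rw [hx, eq_div_iff (by linarith)]
    have : H ≠ 0 := by linarith
    field_simp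
    rw [hHd]; unfold HH; ring
  have hxa : |x| ≤ |j| / H := by
    rw [hx, abs_div, abs_of_pos (by linarith : 0 < H)]
    exact div_le_div_of_nonneg_right h2 (by linarith)
  have hjH : |j| / H ≤ 1/2 := by
    rw [div_le_iff₀ (by linarith)]; linarith
  have hx2 : x ^ 2 ≤ j ^ 2 / H ^ 2 := by
    rw [← sq_abs x, ← sq_abs j, ← div_pow]
    exact pow_le_pow_left₀ (abs_nonneg _) hxa 2
  have hl := log_lower x (by have := abs_le.mp (hxa.trans hjH); linarith)
  rw [hxe, Real.log_div hH'.ne' (by linarith)] at hl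
  have hx1 : (D * j / GG N D + j ^ 2 * N / (16 * GG N D ^ 3)) / H ≤ x :=
    div_le_div_of_nonneg_right h1 (by linarith)
  have : 2 * j ^ 2 / H ^ 2 = 2 * (j ^ 2 / H ^ 2) := by ring
  linarith

/-- generator (times n²) -/
noncomputable def LL (q : ℝ) (f : ℝ → ℝ → ℝ → ℝ) (a b u : ℝ) : ℝ :=
  q * a * b * (f (a - 1) b (u + 1) - f a b u) + a * b * (f a (b - 1) (u + 1) - f a b u)
  + u * a * (f (a + 1) b (u - 1) - f a b u) + u * b * (f a (b + 1) (u - 1) - f a b u)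

noncomputable def F1 (q K N : ℝ) : ℝ → ℝ → ℝ → ℝ := fun a b _ => -Real.log (HH K N (a - q * b))
noncomputable def F2 : ℝ → ℝ → ℝ → ℝ := fun a b _ => -Real.log (a + b)
noncomputable def F3 (κ : ℝ) : ℝ → ℝ → ℝ → ℝ := fun _ b u => Real.log (1 + u + κ * b)
noncomputable def F4 (κ : ℝ) : ℝ → ℝ → ℝ → ℝ := fun a _ u => Real.log (1 + u + κ * a)

lemma LF1_le (q K N a b u : ℝ) (hq0 : 0 < q) (hq1 : q ≤ 1) (hN : 1 ≤ N) (hK : 2 ≤ K)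
    (ha : 0 ≤ a) (hb : 0 ≤ b) (hu : 0 ≤ u) :
    LL q (F1 q K N) a b u ≤
      -((u * (a - q * b) ^ 2 / GG N (a - q * b) +
        (q * a * b + q ^ 2 * (a * b) + u * a + q ^ 2 * (u * b)) * N / (16 * GG N (a - q * b) ^ 3))
          / HH K N (a - q * b))
      + 2 * (q * a * b + q ^ 2 * (a * b) + u * a + q ^ 2 * (u * b)) / HH K N (a - q * b) ^ 2 := by
  unfold LL F1
  set D := a - q * b with hD
  have e1 : a - 1 - q * b = D + (-1) := by rw [hD]; ring
  have e2 : a - q * (b - 1) = D + q := by rw [hD]; ring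
  have e3 : a + 1 - q * b = D + 1 := by rw [hD]; ring
  have e4 : a - q * (b + 1) = D + (-q) := by rw [hD]; ring
  simp only [e1, e2, e3, e4]
  have s1 := mul_le_mul_of_nonneg_left (F1_step K N D (-1) hN hK (by simp)) (by positivity : 0 ≤ q * a * b)
  have s2 := mul_le_mul_of_nonneg_left (F1_step K N D q hN hK (by rw [abs_of_pos hq0]; exact hq1)) (by positivity : 0 ≤ a * b)
  have s3 := mul_le_mul_of_nonneg_left (F1_step K N D 1 hN hK (by simp)) (by positivity : 0 ≤ u * a)
  have s4 := mul_le_mul_of_nonneg_left (F1_step K N D (-q) hN hK (by rw [abs_neg, abs_of_pos hq0]; exact hq1)) (by positivity : 0 ≤ u * b)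
  refine (add_le_add (add_le_add (add_le_add s1 s2) s3) s4).trans (le_of_eq ?_)
  have : u * D ^ 2 = u * D * (a - q * b) := by rw [← hD]; ring
  rw [this]
  ring

lemma LF1_small (q K N a b u : ℝ) (hq0 : 0 < q) (hq1 : q ≤ 1) (hN : 1 ≤ N) (hK : 2 ≤ K)
    (ha : 0 ≤ a) (hb : 0 ≤ b) (hu : 0 ≤ u) (hsum : a + b + u = N) :
    LL q (F1 q K N) a b u ≤ 2 * N / K ^ 2 := by
  refine (LF1_le q K N a b u hq0 hq1 hN hK ha hb hu).trans ?_
  set D := a - q * b with hD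
  have hg := GG_pos hN D
  have hs : 1 ≤ Real.sqrt N := Real.one_le_sqrt.mpr hN
  have hs2 : Real.sqrt N ^ 2 = N := Real.sq_sqrt (by linarith)
  have hH : K * Real.sqrt N ≤ HH K N D := by unfold HH; linarith
  have hH0 : 0 < HH K N D := by nlinarith
  set S := q * a * b + q ^ 2 * (a * b) + u * a + q ^ 2 * (u * b) with hS
  have hS0 : 0 ≤ S := by positivity
  have hS1 : S ≤ N ^ 2 := by
    have hq2 : q ^ 2 ≤ 1 := by nlinarith
    have h1 : q * (a * b) ≤ 1 * (a * b) := mul_le_mul_of_nonneg_right hq1 (by positivity)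
    have h2 : q ^ 2 * (a * b) ≤ 1 * (a * b) := mul_le_mul_of_nonneg_right hq2 (by positivity)
    have h3 : q ^ 2 * (u * b) ≤ 1 * (u * b) := mul_le_mul_of_nonneg_right hq2 (by positivity)
    rw [← hsum, hS]
    nlinarith [mul_nonneg ha hb, mul_nonneg hu ha, mul_nonneg hu hb, sq_nonneg a, sq_nonneg b, sq_nonneg u]
  have h1 : 0 ≤ (u * D ^ 2 / GG N D + S * N / (16 * GG N D ^ 3)) / HH K N D := by positivity
  have h2 : 2 * S / HH K N D ^ 2 ≤ 2 * N / K ^ 2 := by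
    have : 2 * N / K ^ 2 = 2 * N ^ 2 / (K * Real.sqrt N) ^ 2 := by
      rw [mul_pow, hs2]; field_simp
    rw [this]
    gcongr
  linarith

set_option maxHeartbeats 1000000 in
lemma LF1_big (q K N a b u η : ℝ) (hq0 : 0 < q) (hq1 : q ≤ 1) (hN : 1 ≤ N) (hK : 192 ≤ K)
    (ha : 0 ≤ a) (hb : 0 ≤ b) (hu : 0 ≤ u) (hsum : a + b + u = N) (hη : 0 < η) (hKη : 8 ≤ K * η)
    (huη : η * N ≤ u) :
    LL q (F1 q K N) a b u ≤ -(q ^ 2 * u * (a + b) / (96 * (K + 2) * N)) ∨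
    LL q (F1 q K N) a b u ≤ - (u / (4 * (K + 2))) := by
  have h0 := LF1_le q K N a b u hq0 hq1 hN (by linarith) ha hb hu
  set D := a - q * b with hD
  have hg := GG_pos hN D
  have hg2 := GG_sq hN D
  have hs : 1 ≤ Real.sqrt N := Real.one_le_sqrt.mpr hN
  have hs2 : Real.sqrt N ^ 2 = N := Real.sq_sqrt (by linarith)
  have hHe : HH K N D = K * Real.sqrt N + GG N D := rfl
  have hH : K * Real.sqrt N ≤ HH K N D := by linarith
  have hH0 : 0 < HH K N D := by nlinarith
  set S := q * a * b + q ^ 2 * (a * b) + u * a + q ^ 2 * (u * b) with hS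
  have hS0 : 0 ≤ S := by positivity
  have hq2 : q ^ 2 ≤ 1 := by nlinarith
  have hS1 : S ≤ N ^ 2 := by
    have h1 : q * (a * b) ≤ 1 * (a * b) := mul_le_mul_of_nonneg_right hq1 (by positivity)
    have h2 : q ^ 2 * (a * b) ≤ 1 * (a * b) := mul_le_mul_of_nonneg_right hq2 (by positivity)
    have h3 : q ^ 2 * (u * b) ≤ 1 * (u * b) := mul_le_mul_of_nonneg_right hq2 (by positivity)
    rw [← hsum, hS]
    nlinarith [mul_nonneg ha hb, mul_nonneg hu ha, mul_nonneg hu hb, sq_nonneg a, sq_nonneg b, sq_nonneg u]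
  have hS2 : q ^ 2 * u * (a + b) ≤ S := by
    have h1 : q ^ 2 * (u * a) ≤ 1 * (u * a) := mul_le_mul_of_nonneg_right hq2 (by positivity)
    have h2 : 0 ≤ q * a * b := by positivity
    have h3 : 0 ≤ q ^ 2 * (a * b) := by positivity
    rw [hS]; nlinarith
  set H := HH K N D with hHd
  set g := GG N D with hgd
  set r := Real.sqrt N with hr
  have hform : -((u * D ^ 2 / g + S * N / (16 * g ^ 3)) / H) + 2 * S / H ^ 2
      = -((u * D ^ 2 / g + S * N / (16 * g ^ 3) - 2 * S / H) / H) := by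
    field_simp; ring
  rw [hform] at h0
  have hSH : 2 * S / H ≤ 2 * S / (K * r) := by
    gcongr
  rcases le_total (D ^ 2) N with hDN | hDN
  · left
    refine h0.trans (neg_le_neg ?_)
    have hgr : g ≤ 3 / 2 * r := by
      refine (le_abs_self g).trans (abs_le_of_sq_le_sq ?_ (by positivity))
      nlinarith
    have hg3 : g ^ 3 ≤ 3 * N * r := by
      have : g ^ 3 = g ^ 2 * g := by ring
      rw [this]
      calc g ^ 2 * g ≤ (2 * N) * (3 / 2 * r) := by gcongr; linarith
        _ = _ := by ring
    have t1 : S / (48 * r) ≤ S * N / (16 * g ^ 3) := by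
      calc S / (48 * r) = S * N / (16 * (3 * N * r)) := by field_simp; ring
        _ ≤ _ := by gcongr
    have t2 : 2 * S / (K * r) ≤ S / (96 * r) := by
      calc 2 * S / (K * r) ≤ 2 * S / (192 * r) := by gcongr
        _ = _ := by field_simp; ring
    have t3 : S / (48 * r) - S / (96 * r) = S / (96 * r) := by field_simp; ring
    have t4 : 0 ≤ u * D ^ 2 / g := by positivity
    have t5 : H ≤ (K + 2) * r := by
      have : (K + 2) * r = K * r + 2 * r := by ring
      rw [hHe]; linarith
    calc q ^ 2 * u * (a + b) / (96 * (K + 2) * N) ≤ S / (96 * (K + 2) * N) := by gcongr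
      _ = (S / (96 * r)) / ((K + 2) * r) := by rw [← hs2]; field_simp
      _ ≤ (S / (96 * r)) / H := by gcongr
      _ ≤ _ := by gcongr; linarith
  · right
    refine h0.trans (neg_le_neg ?_)
    have hrg : r ≤ g := Real.sqrt_le_sqrt (by nlinarith)
    have t1 : u * g / 2 ≤ u * D ^ 2 / g := by
      rw [div_le_div_iff₀ (by norm_num) hg]
      nlinarith [mul_nonneg hu (by linarith : 0 ≤ D ^ 2 - N)]
    have t2 : 2 * S / (K * r) ≤ u * g / 4 := by
      rw [div_le_iff₀ (by positivity)]
      calc 2 * S ≤ 2 * N ^ 2 := by linarith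
        _ ≤ (K * η) * N ^ 2 / 4 := by nlinarith [sq_nonneg N]
        _ = (η * N) * r / 4 * (K * r) := by
            have : (η * N) * r / 4 * (K * r) = (K * η) * (N * r ^ 2) / 4 := by ring
            rw [this, hs2]; ring
        _ ≤ _ := by gcongr
    have t3 : 0 ≤ S * N / (16 * g ^ 3) := by positivity
    have t5 : H ≤ (K + 2) * g := by
      have h1 : (K + 2) * g = K * g + 2 * g := by ring
      have h2 : K * r ≤ K * g := by gcongr
      rw [hHe]; linarith
    calc u / (4 * (K + 2)) = (u * g / 4) / ((K + 2) * g) := by field_simp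
      _ ≤ (u * g / 4) / H := by gcongr
      _ ≤ _ := by gcongr; linarith

lemma wlog_le (w z z' : ℝ) (hw : 0 ≤ w) (hz : 0 < z) (h : w = 0 ∨ 0 < z') :
    w * (Real.log z' - Real.log z) ≤ w * ((z' - z) / z) := by
  rcases h with h | h
  · simp [h]
  · refine mul_le_mul_of_nonneg_left ?_ hw
    rw [← Real.log_div h.ne' hz.ne']
    have := Real.log_le_sub_one_of_pos (div_pos h hz)
    rw [sub_div, div_self hz.ne']
    exact this

lemma LF3_le (q κ a b u : ℝ) (hq0 : 0 < q) (hκ : 2 * (1 + q) ≤ κ)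
    (ha : 0 ≤ a) (hb : b = 0 ∨ 1 ≤ b) (hu : u = 0 ∨ 1 ≤ u) :
    LL q (F3 κ) a b u ≤ (κ * u * b - a * b - u * (a + b)) / (1 + u + κ * b) := by
  have hb0 : 0 ≤ b := by rcases hb with h | h <;> linarith
  have hu0 : 0 ≤ u := by rcases hu with h | h <;> linarith
  have hκ0 : 0 < κ := by linarith
  have hz : 0 < 1 + u + κ * b := by positivity
  unfold LL F3
  have s1 := wlog_le (q * a * b) (1 + u + κ * b) (1 + (u + 1) + κ * b) (by positivity) hz (Or.inr (by positivity))
  have s2 := wlog_le (a * b) (1 + u + κ * b) (1 + (u + 1) + κ * (b - 1)) (by positivity) hz (by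
    rcases hb with h | h
    · left; simp [h]
    · right; have := mul_nonneg hκ0.le (by linarith : 0 ≤ b - 1); linarith)
  have s3 := wlog_le (u * a) (1 + u + κ * b) (1 + (u - 1) + κ * b) (by positivity) hz (by
    rcases hu with h | h
    · left; simp [h]
    · right; have := mul_nonneg hκ0.le hb0; linarith)
  have s4 := wlog_le (u * b) (1 + u + κ * b) (1 + (u - 1) + κ * (b + 1)) (by positivity) hz (by
    right; have := mul_nonneg hκ0.le hb0; linarith)
  refine (add_le_add (add_le_add (add_le_add s1 s2) s3) s4).trans ?_
  have : q * a * b * ((1 + (u + 1) + κ * b - (1 + u + κ * b)) / (1 + u + κ * b)) +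
          a * b * ((1 + (u + 1) + κ * (b - 1) - (1 + u + κ * b)) / (1 + u + κ * b)) +
        u * a * ((1 + (u - 1) + κ * b - (1 + u + κ * b)) / (1 + u + κ * b)) +
      u * b * ((1 + (u - 1) + κ * (b + 1) - (1 + u + κ * b)) / (1 + u + κ * b))
      = (κ * u * b - (κ - 1 - q) * (a * b) - u * (a + b)) / (1 + u + κ * b) := by ring
  rw [this]
  refine div_le_div_of_nonneg_right ?_ hz.le
  nlinarith [mul_nonneg ha hb0]

lemma LF4_le (q κ a b u : ℝ) (hq0 : 0 < q) (hκ : 2 * (1 + q) ≤ κ * q)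
    (hb : 0 ≤ b) (ha : a = 0 ∨ 1 ≤ a) (hu : u = 0 ∨ 1 ≤ u) :
    LL q (F4 κ) a b u ≤ (κ * u * a - a * b - u * (a + b)) / (1 + u + κ * a) := by
  have ha0 : 0 ≤ a := by rcases ha with h | h <;> linarith
  have hu0 : 0 ≤ u := by rcases hu with h | h <;> linarith
  have hκ0 : 0 < κ := pos_of_mul_pos_left (by linarith : 0 < κ * q) hq0.le
  have hz : 0 < 1 + u + κ * a := by positivity
  unfold LL F4
  have s2 := wlog_le (a * b) (1 + u + κ * a) (1 + (u + 1) + κ * a) (by positivity) hz (Or.inr (by positivity))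
  have s1 := wlog_le (q * a * b) (1 + u + κ * a) (1 + (u + 1) + κ * (a - 1)) (by positivity) hz (by
    rcases ha with h | h
    · left; simp [h]
    · right; have := mul_nonneg hκ0.le (by linarith : 0 ≤ a - 1); linarith)
  have s4 := wlog_le (u * b) (1 + u + κ * a) (1 + (u - 1) + κ * a) (by positivity) hz (by
    rcases hu with h | h
    · left; simp [h]
    · right; have := mul_nonneg hκ0.le ha0; linarith)
  have s3 := wlog_le (u * a) (1 + u + κ * a) (1 + (u - 1) + κ * (a + 1)) (by positivity) hz (by
    right; have := mul_nonneg hκ0.le ha0; linarith)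
  refine (add_le_add (add_le_add (add_le_add s1 s2) s3) s4).trans ?_
  have : q * a * b * ((1 + (u + 1) + κ * (a - 1) - (1 + u + κ * a)) / (1 + u + κ * a)) +
          a * b * ((1 + (u + 1) + κ * a - (1 + u + κ * a)) / (1 + u + κ * a)) +
        u * a * ((1 + (u - 1) + κ * (a + 1) - (1 + u + κ * a)) / (1 + u + κ * a)) +
      u * b * ((1 + (u - 1) + κ * a - (1 + u + κ * a)) / (1 + u + κ * a))
      = (κ * u * a - (κ * q - 1 - q) * (a * b) - u * (a + b)) / (1 + u + κ * a) := by ring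
  rw [this]
  refine div_le_div_of_nonneg_right ?_ hz.le
  nlinarith [mul_nonneg ha0 hb]

lemma LF2_le (q a b u : ℝ) (hq0 : 0 < q) (hq1 : q ≤ 1) (hm : 1 ≤ a + b)
    (ha : a = 0 ∨ 1 ≤ a) (hb : b = 0 ∨ 1 ≤ b) (hu : 0 ≤ u) :
    LL q F2 a b u ≤ -(u / 2) + 4 * (a * b) / (a + b) := by
  have ha0 : 0 ≤ a := by rcases ha with h | h <;> linarith
  have hb0 : 0 ≤ b := by rcases hb with h | h <;> linarith
  set m := a + b with hmd
  have up : -Real.log (m + 1) - -Real.log m ≤ -(1 / (2 * m)) := by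
    have h := Real.one_sub_inv_le_log_of_pos (by positivity : 0 < (m + 1) / m)
    rw [Real.log_div (by positivity) (by positivity), inv_div] at h
    have : 1 / (2 * m) ≤ 1 - m / (m + 1) := by
      rw [one_sub_div (by positivity), div_le_div_iff₀ (by positivity) (by positivity)]
      linarith
    linarith
  have dn : (1 + q) * (a * b) * (-Real.log (m - 1) - -Real.log m) ≤ 4 * (a * b) / m := by
    rcases ha with h | h
    · simp [h]
    rcases hb with h' | h'
    · simp [h']
    have hm2 : 2 ≤ m := by linarith
    have h1 := Real.log_le_sub_one_of_pos (div_pos (by linarith) (by linarith) : 0 < m / (m - 1))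
    rw [Real.log_div (by linarith) (by linarith)] at h1
    have h2 : m / (m - 1) - 1 ≤ 2 / m := by
      rw [div_sub_one (by linarith), div_le_div_iff₀ (by linarith) (by linarith)]
      linarith
    calc (1 + q) * (a * b) * (-Real.log (m - 1) - -Real.log m) ≤ (1 + 1) * (a * b) * (2 / m) := by
          apply mul_le_mul
          · gcongr
          · linarith
          · have := Real.log_le_log (by linarith : 0 < m - 1) (by linarith : m - 1 ≤ m)
            linarith
          · positivity
      _ = _ := by ring
  have e : LL q F2 a b u = (1 + q) * (a * b) * (-Real.log (m - 1) - -Real.log m)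
      + u * m * (-Real.log (m + 1) - -Real.log m) := by
    unfold LL F2
    rw [show a - 1 + b = m - 1 by ring, show a + (b - 1) = m - 1 by ring,
      show a + 1 + b = m + 1 by ring, show a + (b + 1) = m + 1 by ring, ← hmd, hmd]
    ring
  rw [e]
  have := mul_le_mul_of_nonneg_left up (by positivity : 0 ≤ u * m)
  have e2 : u * m * -(1 / (2 * m)) = -(u / 2) := by field_simp
  linarith

noncomputable def VV (q A E K κ N : ℝ) : ℝ → ℝ → ℝ → ℝ := fun a b u =>
  A * F1 q K N a b u + E * F2 a b u + F3 κ a b u + F4 κ a b u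

lemma LL_VV (q A E K κ N a b u : ℝ) : LL q (VV q A E K κ N) a b u =
    A * LL q (F1 q K N) a b u + E * LL q F2 a b u + LL q (F3 κ) a b u + LL q (F4 κ) a b u := by
  unfold LL VV; ring

/-- generic bound: positive part -/
lemma frac_le (κ u b X : ℝ) (hκ : 0 < κ) (hu : 0 ≤ u) (hb : 0 ≤ b) (hX : 0 ≤ X) :
    (κ * u * b - X) / (1 + u + κ * b) ≤ u - X / (1 + u + κ * b) ∧
    (κ * u * b - X) / (1 + u + κ * b) ≤ κ * b := by
  have hz : 0 < 1 + u + κ * b := by positivity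
  have hub := mul_nonneg hu hb
  constructor
  · rw [sub_div]
    have : κ * u * b / (1 + u + κ * b) ≤ u := by
      rw [div_le_iff₀ hz]; nlinarith
    linarith
  · rw [div_le_iff₀ hz]
    nlinarith [mul_nonneg hκ.le hb, mul_nonneg (mul_nonneg hκ.le hb) (mul_nonneg hκ.le hb)]

/-- stuff bound: if a is large and not a consensus -/
lemma stuff_ge (κ a b u N : ℝ) (hκ : 1 ≤ κ) (hb : 0 ≤ b) (hu : 0 ≤ u) (hbu : 1 ≤ b + u)
    (ha : N / 3 ≤ a) (hN : 0 ≤ N) :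
    N / (3 * (1 + κ)) ≤ (a * b + u * (a + b)) / (1 + u + κ * b) := by
  have hz : 0 < 1 + u + κ * b := by positivity
  rw [div_le_div_iff₀ (by positivity) hz]
  have h1 : 1 + u + κ * b ≤ (1 + κ) * (b + u) := by nlinarith
  have h2 : a * (b + u) ≤ a * b + u * (a + b) := by nlinarith [mul_nonneg hu hb]
  calc N * (1 + u + κ * b) ≤ (3 * a) * ((1 + κ) * (b + u)) :=
        mul_le_mul (by linarith) h1 hz.le (by linarith)
    _ = (a * (b + u)) * (3 * (1 + κ)) := by ring
    _ ≤ _ := by gcongr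

set_option maxHeartbeats 4000000 in
lemma drift (q : ℝ) (hq0 : 0 < q) (hq1 : q ≤ 1) : ∃ A E K κ c0 : ℝ, 0 < A ∧ 0 < E ∧ 192 ≤ K ∧ 1 ≤ κ ∧
    0 < c0 ∧ ∀ N a b u : ℝ, (a = 0 ∨ 1 ≤ a) → (b = 0 ∨ 1 ≤ b) → (u = 0 ∨ 1 ≤ u) → a + b + u = N →
      1 ≤ a + b → 1 ≤ b + u → 1 ≤ a + u → LL q (VV q A E K κ N) a b u ≤ - c0 * N := by
  obtain ⟨κ, hκ⟩ : ∃ κ : ℝ, κ = 2 * (1 + q) / q := ⟨_, rfl⟩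
  have hκq : κ * q = 2 * (1 + q) := by rw [hκ]; field_simp
  have hκ2 : 2 * (1 + q) ≤ κ := by
    rw [hκ, le_div_iff₀ hq0]; nlinarith
  have hκ1 : 2 ≤ κ := by linarith
  obtain ⟨l, hl⟩ : ∃ l : ℝ, l = 1 / (3 * (1 + κ)) := ⟨_, rfl⟩
  have hl0 : 0 < l := by rw [hl]; positivity
  have hl1 : l ≤ 1 / 9 := by
    rw [hl]; apply one_div_le_one_div_of_le <;> linarith
  have hlκ : κ * l ≤ 1 / 3 := by
    rw [hl, mul_one_div, div_le_div_iff₀ (by positivity) (by norm_num)]; linarith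
  -- E = l / 16, η = l / (256 κ)
  obtain ⟨E, hE⟩ : ∃ E : ℝ, E = l / 16 := ⟨_, rfl⟩
  have hE0 : 0 < E := by rw [hE]; positivity
  obtain ⟨η, hη⟩ : ∃ η : ℝ, η = E / (32 * κ) := ⟨_, rfl⟩
  have hη0 : 0 < η := by rw [hη]; positivity
  have hηκ : κ * η = E / 32 := by rw [hη]; field_simp
  have hηE : η ≤ E / 64 := by
    rw [hη]; apply div_le_div_of_nonneg_left hE0.le (by norm_num) (by linarith)
  obtain ⟨R, hR⟩ : ∃ R : ℝ, R = 384 / (q ^ 2 * η ^ 2) + 16 / η := ⟨_, rfl⟩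
  have hR0 : 0 < R := by rw [hR]; positivity
  have hR1 : 4 ≤ R * (q ^ 2 * η ^ 2 / 96) := by
    have : R * (q ^ 2 * η ^ 2 / 96) = 4 + 16 / η * (q ^ 2 * η ^ 2 / 96) := by
      rw [hR, add_mul]; congr 1; field_simp; norm_num
    rw [this]; have : 0 ≤ 16 / η * (q ^ 2 * η ^ 2 / 96) := by positivity
    linarith
  have hR2 : 4 ≤ R * (η / 4) := by
    have : R * (η / 4) = 384 / (q ^ 2 * η ^ 2) * (η / 4) + 4 := by
      rw [hR, add_mul]; congr 1; field_simp; norm_num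
    rw [this]; have : 0 ≤ 384 / (q ^ 2 * η ^ 2) * (η / 4) := by positivity
    linarith
  obtain ⟨K, hK⟩ : ∃ K : ℝ, K = 192 + 8 / η + 16 * R / l := ⟨_, rfl⟩
  have hK1 : 192 ≤ K := by
    rw [hK]; have : 0 ≤ 8 / η + 16 * R / l := by positivity
    linarith
  have hK2 : 8 ≤ K * η := by
    have : K * η = 192 * η + 8 + 16 * R / l * η := by rw [hK]; field_simp
    rw [this]; have : 0 ≤ 192 * η + 16 * R / l * η := by positivity
    linarith
  have hK3 : 16 * R ≤ K * l := by
    have : K * l = 192 * l + 8 / η * l + 16 * R := by rw [hK]; field_simp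
    rw [this]; have : 0 ≤ 192 * l + 8 / η * l := by positivity
    linarith
  have hA3 : (K + 2) * R * 2 / K ^ 2 ≤ l / 4 := by
    rw [div_le_div_iff₀ (by positivity) (by norm_num)]
    nlinarith [mul_le_mul_of_nonneg_left hK3 (by linarith : 0 ≤ K)]
  refine ⟨(K + 2) * R, E, K, κ, E / 16, by positivity, hE0, hK1, by linarith, by positivity, ?_⟩
  intro N a b u ha hb hu hsum hm hbu hau
  have ha0 : 0 ≤ a := by rcases ha with h | h <;> linarith
  have hb0 : 0 ≤ b := by rcases hb with h | h <;> linarith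
  have hu0 : 0 ≤ u := by rcases hu with h | h <;> linarith
  have hN : 1 ≤ N := by linarith
  have hab := mul_nonneg ha0 hb0
  have hX : 0 ≤ a * b + u * (a + b) := by positivity
  have hLF3 := LF3_le q κ a b u hq0 hκ2 ha0 hb hu
  have hLF4 := LF4_le q κ a b u hq0 hκq.ge hb0 ha hu
  rw [sub_sub] at hLF3 hLF4
  obtain ⟨h31, h32⟩ := frac_le κ u b _ (by linarith) hu0 hb0 hX
  obtain ⟨h41, h42⟩ := frac_le κ u a _ (by linarith) hu0 ha0 hX
  have hX3 : 0 ≤ (a * b + u * (a + b)) / (1 + u + κ * b) := by positivity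
  have hX4 : 0 ≤ (a * b + u * (a + b)) / (1 + u + κ * a) := by positivity
  have hLF2 := LF2_le q a b u hq0 hq1 hm ha hb hu0
  have hmin : 4 * (a * b) / (a + b) ≤ a + b := by
    rw [div_le_iff₀ (by linarith)]; nlinarith [sq_nonneg (a - b)]
  have hELF2 := mul_le_mul_of_nonneg_left (hLF2.trans (add_le_add_right hmin _)) hE0.le
  rw [LL_VV]
  rcases lt_or_ge u (η * N) with hcase | hcase
  · -- u small
    have h1 := LF1_small q K N a b u hq0 hq1 hN (by linarith) ha0 hb0 hu0 hsum
    have h1' : (K + 2) * R * LL q (F1 q K N) a b u ≤ l / 4 * N := by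
      calc _ ≤ (K + 2) * R * (2 * N / K ^ 2) := mul_le_mul_of_nonneg_left h1 (by positivity)
        _ = (K + 2) * R * 2 / K ^ 2 * N := by ring
        _ ≤ _ := by gcongr
    have hst : LL q (F3 κ) a b u + LL q (F4 κ) a b u ≤ 2 * u - l * N := by
      have hlN : N / (3 * (1 + κ)) = l * N := by rw [hl]; ring
      have hηN : η * N ≤ 1/3 * N := by gcongr; linarith
      rcases le_total b a with hba | hba
      · have := stuff_ge κ a b u N (by linarith) hb0 hu0 hbu (by linarith) (by linarith)
        linarith
      · have := stuff_ge κ b a u N (by linarith) ha0 hu0 hau (by linarith) (by linarith)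
        rw [show b * a + u * (b + a) = a * b + u * (a + b) by ring] at this
        linarith
    have hE2 : E * LL q F2 a b u ≤ E * N := hELF2.trans (by gcongr; linarith)
    have : η * N ≤ l / 64 * N := by gcongr; linarith
    have hEN : E * N = l / 16 * N := by rw [hE]
    have hlN : 0 ≤ l * N := by positivity
    linarith
  · have hbig := LF1_big q K N a b u η hq0 hq1 hN hK1 ha0 hb0 hu0 hsum hη0 hK2 hcase
    rcases le_total (a + b) (η * N) with hm2 | hm2
    · -- near zero
      have h1 : LL q (F1 q K N) a b u ≤ 0 := by
        rcases hbig with h | h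
        · exact h.trans (neg_nonpos.mpr (by positivity))
        · exact h.trans (neg_nonpos.mpr (by positivity))
      have h1' : (K + 2) * R * LL q (F1 q K N) a b u ≤ 0 :=
        mul_nonpos_of_nonneg_of_nonpos (by positivity) h1
      have h2 : κ * (a + b) ≤ E / 32 * N := by
        calc κ * (a + b) ≤ κ * (η * N) := by gcongr
          _ = _ := by rw [← hηκ]; ring
      have hη4 : η * N ≤ 1 / 8 * N := by gcongr; linarith
      have h3 : E * LL q F2 a b u ≤ E * (-(1/4) * N) := hELF2.trans (by gcongr; linarith)
      have hEN : 0 ≤ E * N := by positivity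
      linarith
    · have h1' : (K + 2) * R * LL q (F1 q K N) a b u ≤ -4 * N := by
        rcases hbig with h | h
        · refine (mul_le_mul_of_nonneg_left h (by positivity)).trans ?_
          have : (K + 2) * R * -(q ^ 2 * u * (a + b) / (96 * (K + 2) * N)) = -(R * (q ^ 2 * (u * (a + b)) / 96) / N) := by
            field_simp
          rw [this, neg_mul]
          apply neg_le_neg
          rw [le_div_iff₀ (by linarith)]
          calc 4 * N * N ≤ (R * (q ^ 2 * η ^ 2 / 96)) * N * N := by gcongr
            _ = R * (q ^ 2 * ((η * N) * (η * N)) / 96) := by ring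
            _ ≤ _ := by gcongr
        · refine (mul_le_mul_of_nonneg_left h (by positivity)).trans ?_
          have : (K + 2) * R * -(u / (4 * (K + 2))) = -(R * (u / 4)) := by
            field_simp
          rw [this, neg_mul]
          apply neg_le_neg
          calc 4 * N ≤ (R * (η / 4)) * N := by gcongr
            _ = R * ((η * N) / 4) := by ring
            _ ≤ _ := by gcongr
      have hE2 : E * LL q F2 a b u ≤ E * N := hELF2.trans (by gcongr; linarith)
      have hE1 : E * N ≤ 1 * N := by gcongr; linarith
      linarith

lemma VV_bounds (q A E K κ N a b u : ℝ) (hq0 : 0 < q) (hq1 : q ≤ 1) (hA : 0 < A) (hE : 0 < E)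
    (hK : 192 ≤ K) (hκ : 1 ≤ κ) (ha : 0 ≤ a) (hb : 0 ≤ b) (hu : 0 ≤ u) (hsum : a + b + u = N)
    (hm : 1 ≤ a + b) :
    -(A * (Real.log (K + 2) + Real.log N)) - E * Real.log N ≤ VV q A E K κ N a b u ∧
    VV q A E K κ N a b u ≤ 2 * (Real.log (2 + κ) + Real.log N) := by
  have hN : 1 ≤ N := by linarith
  have hs : 1 ≤ Real.sqrt N := Real.one_le_sqrt.mpr hN
  have hs2 : Real.sqrt N ^ 2 = N := Real.sq_sqrt (by linarith)
  have hsN : Real.sqrt N ≤ N := by nlinarith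
  have hG := GG_pos hN (a - q * b)
  have hG2 : GG N (a - q * b) ≤ 2 * N := by
    refine (le_abs_self _).trans (abs_le_of_sq_le_sq ?_ (by linarith))
    rw [GG_sq hN]
    have hqb : q * b ≤ b := by nlinarith
    have hqb0 : 0 ≤ q * b := by positivity
    nlinarith
  have hH1 : 1 ≤ HH K N (a - q * b) := by unfold HH; nlinarith
  have hH2 : HH K N (a - q * b) ≤ (K + 2) * N := by
    unfold HH; nlinarith
  have l1 : 0 ≤ Real.log (HH K N (a - q * b)) := Real.log_nonneg hH1
  have l2 : Real.log (HH K N (a - q * b)) ≤ Real.log (K + 2) + Real.log N := by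
    rw [← Real.log_mul (by linarith) (by linarith)]
    exact Real.log_le_log (by linarith) hH2
  have l3 : 0 ≤ Real.log (a + b) := Real.log_nonneg hm
  have l4 : Real.log (a + b) ≤ Real.log N := Real.log_le_log (by linarith) (by linarith)
  have hκb : 0 ≤ κ * b := by positivity
  have hκa : 0 ≤ κ * a := by positivity
  have l5 : 0 ≤ Real.log (1 + u + κ * b) := Real.log_nonneg (by linarith)
  have l6 : 0 ≤ Real.log (1 + u + κ * a) := Real.log_nonneg (by linarith)
  have l7 : Real.log (1 + u + κ * b) ≤ Real.log (2 + κ) + Real.log N := by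
    rw [← Real.log_mul (by linarith) (by linarith)]
    refine Real.log_le_log (by linarith) ?_
    have : κ * b ≤ κ * N := by gcongr; linarith
    nlinarith
  have l8 : Real.log (1 + u + κ * a) ≤ Real.log (2 + κ) + Real.log N := by
    rw [← Real.log_mul (by linarith) (by linarith)]
    refine Real.log_le_log (by linarith) ?_
    have : κ * a ≤ κ * N := by gcongr; linarith
    nlinarith
  unfold VV F1 F2 F3 F4
  have m1 := mul_nonneg hA.le l1
  have m2 := mul_le_mul_of_nonneg_left l2 hA.le
  have m3 := mul_nonneg hE.le l3
  have m4 := mul_le_mul_of_nonneg_left l4 hE.le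
  constructor <;> linarith

lemma pot (q : ℝ) (hq0 : 0 < q) (hq1 : q ≤ 1) : ∃ c0 M : ℝ, 0 < c0 ∧ 0 < M ∧ ∀ N : ℝ, 2 ≤ N →
    ∃ U : ℝ → ℝ → ℝ → ℝ,
      (∀ a b u : ℝ, 0 ≤ a → 0 ≤ b → 0 ≤ u → a + b + u = N → 1 ≤ a + b →
        1 ≤ U a b u ∧ U a b u ≤ M * Real.log N) ∧
      ∀ a b u : ℝ, (a = 0 ∨ 1 ≤ a) → (b = 0 ∨ 1 ≤ b) → (u = 0 ∨ 1 ≤ u) → a + b + u = N →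
        1 ≤ a + b → 1 ≤ b + u → 1 ≤ a + u → LL q U a b u ≤ - c0 * N := by
  obtain ⟨A, E, K, κ, c0, hA, hE, hK, hκ, hc0, hd⟩ := drift q hq0 hq1
  have hlK : 0 ≤ Real.log (K + 2) := Real.log_nonneg (by linarith)
  have hlκ : 0 ≤ Real.log (2 + κ) := Real.log_nonneg (by linarith)
  refine ⟨c0, 2 * (A * Real.log (K + 2)) + A + E + 2 + 4 * Real.log (2 + κ) + 2, hc0, by positivity, ?_⟩
  intro N hN
  have hlN : 1 / 2 ≤ Real.log N :=
    le_trans (by have := Real.log_two_gt_d9; linarith) (Real.log_le_log (by norm_num) hN)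
  set B := A * (Real.log (K + 2) + Real.log N) + E * Real.log N + 1 with hB
  refine ⟨fun a b u => VV q A E K κ N a b u + B, ?_, ?_⟩
  · intro a b u ha hb hu hs hm
    obtain ⟨h1, h2⟩ := VV_bounds q A E K κ N a b u hq0 hq1 hA hE hK hκ ha hb hu hs hm
    constructor
    · simp only [hB]; linarith
    · simp only [hB]
      have e1 : A * Real.log (K + 2) ≤ A * Real.log (K + 2) * (2 * Real.log N) :=
        le_mul_of_one_le_right (by positivity) (by linarith)
      have e2 : Real.log (2 + κ) ≤ Real.log (2 + κ) * (2 * Real.log N) :=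
        le_mul_of_one_le_right (by positivity) (by linarith)
      nlinarith
  · intro a b u ha hb hu hs hm h1 h2
    have := hd N a b u ha hb hu hs hm h1 h2
    have e : LL q (fun a b u => VV q A E K κ N a b u + B) a b u = LL q (VV q A E K κ N) a b u := by
      unfold LL; ring
    rw [e]; exact this

def Nb (x : ℕ × ℕ × ℕ) : Finset (ℕ × ℕ × ℕ) :=
  {(x.1 - 1, x.2.1, x.2.2 + 1), (x.1, x.2.1 - 1, x.2.2 + 1), (x.1 + 1, x.2.1, x.2.2 - 1),
    (x.1, x.2.1 + 1, x.2.2 - 1), x}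

lemma usdStep_eq_zero (n : ℕ) (p : ℝ) (x y : ℕ × ℕ × ℕ) (h : y ∉ Nb x) : usdStep n p x y = 0 := by
  simp only [Nb, Finset.mem_insert, Finset.mem_singleton, not_or] at h
  obtain ⟨h1, h2, h3, h4, h5⟩ := h
  simp [usdStep, h1, h2, h3, h4, h5]

lemma usdStep_sum (n : ℕ) (p : ℝ) (x : ℕ × ℕ × ℕ) (f : ℕ × ℕ × ℕ → ℝ) :
    ∑ y ∈ Nb x, usdStep n p x y * f y =
      (1 - p) * (x.1 : ℝ) * (x.2.1 : ℝ) / (n : ℝ) ^ 2 * f (x.1 - 1, x.2.1, x.2.2 + 1) +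
      (x.1 : ℝ) * (x.2.1 : ℝ) / (n : ℝ) ^ 2 * f (x.1, x.2.1 - 1, x.2.2 + 1) +
      (x.2.2 : ℝ) * (x.1 : ℝ) / (n : ℝ) ^ 2 * f (x.1 + 1, x.2.1, x.2.2 - 1) +
      (x.2.2 : ℝ) * (x.2.1 : ℝ) / (n : ℝ) ^ 2 * f (x.1, x.2.1 + 1, x.2.2 - 1) +
      (1 - ((2 - p) * (x.1 : ℝ) * (x.2.1 : ℝ) + (x.2.2 : ℝ) * ((x.1 : ℝ) + (x.2.1 : ℝ))) / (n : ℝ) ^ 2) * f x := by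
  have m1 : (x.1 - 1, x.2.1, x.2.2 + 1) ∈ Nb x := by simp [Nb]
  have m2 : (x.1, x.2.1 - 1, x.2.2 + 1) ∈ Nb x := by simp [Nb]
  have m3 : (x.1 + 1, x.2.1, x.2.2 - 1) ∈ Nb x := by simp [Nb]
  have m4 : (x.1, x.2.1 + 1, x.2.2 - 1) ∈ Nb x := by simp [Nb]
  have m5 : x ∈ Nb x := by simp [Nb]
  unfold usdStep
  simp only [add_mul, Finset.sum_add_distrib, ite_mul, zero_mul, Finset.sum_ite_eq', if_pos m1,
    if_pos m2, if_pos m3, if_pos m4, if_pos m5]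

def PP (n : ℕ) (x : ℕ × ℕ × ℕ) : Prop := x.1 + x.2.1 + x.2.2 = n ∧ 1 ≤ x.1 + x.2.1
def NC (n : ℕ) (x : ℕ × ℕ × ℕ) : Prop := ¬ (x.1 = n ∨ x.2.1 = n)

lemma usdStep_PP (n : ℕ) (p : ℝ) (x y : ℕ × ℕ × ℕ) (hx : PP n x) (h : usdStep n p x y ≠ 0) :
    PP n y := by
  obtain ⟨a, b, u⟩ := x
  obtain ⟨hs, hm⟩ := hx
  simp only at hs hm
  by_contra hP
  apply h
  unfold usdStep
  simp only
  have t1 : (if y = (a - 1, b, u + 1) then (1 - p) * (a : ℝ) * (b : ℝ) / (n : ℝ) ^ 2 else 0) = 0 := by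
    split_ifs with hy
    · rcases Nat.eq_zero_or_pos a with h0 | h0
      · simp [h0]
      rcases Nat.eq_zero_or_pos b with h1 | h1
      · simp [h1]
      exact absurd (by subst hy; constructor <;> simp only <;> omega) hP
    · rfl
  have t2 : (if y = (a, b - 1, u + 1) then (a : ℝ) * (b : ℝ) / (n : ℝ) ^ 2 else 0) = 0 := by
    split_ifs with hy
    · rcases Nat.eq_zero_or_pos a with h0 | h0
      · simp [h0]
      rcases Nat.eq_zero_or_pos b with h1 | h1
      · simp [h1]
      exact absurd (by subst hy; constructor <;> simp only <;> omega) hP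
    · rfl
  have t3 : (if y = (a + 1, b, u - 1) then (u : ℝ) * (a : ℝ) / (n : ℝ) ^ 2 else 0) = 0 := by
    split_ifs with hy
    · rcases Nat.eq_zero_or_pos u with h0 | h0
      · simp [h0]
      exact absurd (by subst hy; constructor <;> simp only <;> omega) hP
    · rfl
  have t4 : (if y = (a, b + 1, u - 1) then (u : ℝ) * (b : ℝ) / (n : ℝ) ^ 2 else 0) = 0 := by
    split_ifs with hy
    · rcases Nat.eq_zero_or_pos u with h0 | h0
      · simp [h0]
      exact absurd (by subst hy; constructor <;> simp only <;> omega) hP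
    · rfl
  have t5 : y ≠ (a, b, u) := by
    rintro rfl; exact hP ⟨hs, hm⟩
  rw [t1, t2, t3, t4, if_neg t5]; simp

lemma usd_drift (n : ℕ) (hn : 2 ≤ n) (p c0 : ℝ) (U : ℝ → ℝ → ℝ → ℝ)
    (hU : ∀ a b u : ℝ, (a = 0 ∨ 1 ≤ a) → (b = 0 ∨ 1 ≤ b) → (u = 0 ∨ 1 ≤ u) → a + b + u = (n : ℝ) →
        1 ≤ a + b → 1 ≤ b + u → 1 ≤ a + u → LL (1 - p) U a b u ≤ - c0 * n)
    (x : ℕ × ℕ × ℕ) (hx : PP n x) (hnc : NC n x) :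
    ∑ y ∈ Nb x, usdStep n p x y * U y.1 y.2.1 y.2.2 ≤ U x.1 x.2.1 x.2.2 - c0 / n := by
  rw [usdStep_sum n p x (fun y => U y.1 y.2.1 y.2.2)]
  obtain ⟨a, b, u⟩ := x
  obtain ⟨hs, hm⟩ := hx
  simp only [NC, not_or] at hs hm hnc ⊢
  have cast01 : ∀ k : ℕ, (k : ℝ) = 0 ∨ 1 ≤ (k : ℝ) := fun k => by
    rcases Nat.eq_zero_or_pos k with h | h
    · left; simp [h]
    · right; exact_mod_cast h
  have hd := hU a b u (cast01 a) (cast01 b) (cast01 u) (by exact_mod_cast hs) (by exact_mod_cast hm)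
    (by have : 1 ≤ b + u := by omega
        exact_mod_cast this) (by have : 1 ≤ a + u := by omega
                                 exact_mod_cast this)
  have w1 : (a : ℝ) * U ((a - 1 : ℕ) : ℝ) b ((u + 1 : ℕ) : ℝ) = a * U (a - 1) b (u + 1) := by
    rcases Nat.eq_zero_or_pos a with h | h
    · simp [h]
    · push_cast [Nat.cast_sub h]; rfl
  have w2 : (b : ℝ) * U a ((b - 1 : ℕ) : ℝ) ((u + 1 : ℕ) : ℝ) = b * U a (b - 1) (u + 1) := by
    rcases Nat.eq_zero_or_pos b with h | h
    · simp [h]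
    · push_cast [Nat.cast_sub h]; rfl
  have w3 : (u : ℝ) * U ((a + 1 : ℕ) : ℝ) b ((u - 1 : ℕ) : ℝ) = u * U (a + 1) b (u - 1) := by
    rcases Nat.eq_zero_or_pos u with h | h
    · simp [h]
    · push_cast [Nat.cast_sub h]; rfl
  have w4 : (u : ℝ) * U a ((b + 1 : ℕ) : ℝ) ((u - 1 : ℕ) : ℝ) = u * U a (b + 1) (u - 1) := by
    rcases Nat.eq_zero_or_pos u with h | h
    · simp [h]
    · push_cast [Nat.cast_sub h]; rfl
  have hn0 : (0 : ℝ) < n := by exact_mod_cast (by omega : 0 < n)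
  have key : (1 - p) * (a : ℝ) * (b : ℝ) / (n : ℝ) ^ 2 * U ((a - 1 : ℕ) : ℝ) b ((u + 1 : ℕ) : ℝ) +
      (a : ℝ) * (b : ℝ) / (n : ℝ) ^ 2 * U a ((b - 1 : ℕ) : ℝ) ((u + 1 : ℕ) : ℝ) +
      (u : ℝ) * (a : ℝ) / (n : ℝ) ^ 2 * U ((a + 1 : ℕ) : ℝ) b ((u - 1 : ℕ) : ℝ) +
      (u : ℝ) * (b : ℝ) / (n : ℝ) ^ 2 * U a ((b + 1 : ℕ) : ℝ) ((u - 1 : ℕ) : ℝ) +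
      (1 - ((2 - p) * (a : ℝ) * (b : ℝ) + (u : ℝ) * ((a : ℝ) + (b : ℝ))) / (n : ℝ) ^ 2) * U a b u
      = U a b u + LL (1 - p) U a b u / (n : ℝ) ^ 2 := by
    unfold LL
    linear_combination ((1 - p) * b / (n : ℝ) ^ 2) * w1 + (a / (n : ℝ) ^ 2) * w2
      + (a / (n : ℝ) ^ 2) * w3 + (b / (n : ℝ) ^ 2) * w4
  rw [key]
  have : LL (1 - p) U a b u / (n : ℝ) ^ 2 ≤ (- c0 * n) / (n : ℝ) ^ 2 := by gcongr
  have e : (- c0 * n) / (n : ℝ) ^ 2 = - (c0 / n) := by field_simp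
  linarith

def cyl (t : ℕ) (s : ℕ → ℕ × ℕ × ℕ) : Set (ℕ → ℕ × ℕ × ℕ) := {ω | ∀ i ≤ t, ω i = s i}

lemma cyl_succ (n : ℕ) (p : ℝ) (x0 : ℕ × ℕ × ℕ) (μ : Measure (ℕ → ℕ × ℕ × ℕ))
    (hμ : IsUSD n p x0 μ) (t : ℕ) (s : ℕ → ℕ × ℕ × ℕ) (y : ℕ × ℕ × ℕ) :
    μ.real (cyl (t + 1) (Function.update s (t + 1) y)) = μ.real (cyl t s) * usdStep n p (s t) y := by
  have h1 := hμ.2 (t + 1) (Function.update s (t + 1) y)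
  have h2 := hμ.2 t s
  unfold cyl Measure.real
  rw [h1, h2, Finset.prod_range_succ]
  have e0 : Function.update s (t + 1) y 0 = s 0 := Function.update_of_ne (by omega) _ _
  have et : Function.update s (t + 1) y t = s t := Function.update_of_ne (by omega) _ _
  have ep : (∏ i ∈ Finset.range t, usdStep n p (Function.update s (t + 1) y i)
      (Function.update s (t + 1) y (i + 1))) = ∏ i ∈ Finset.range t, usdStep n p (s i) (s (i + 1)) := by
    apply Finset.prod_congr rfl
    intro i hi
    have := Finset.mem_range.mp hi
    rw [Function.update_of_ne (by omega), Function.update_of_ne (by omega)]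
  rw [e0, et, ep, Function.update_self, mul_assoc]

lemma chain (n : ℕ) (p : ℝ) (x0 : ℕ × ℕ × ℕ) (μ : Measure (ℕ → ℕ × ℕ × ℕ))
    (hμ : IsUSD n p x0 μ) (f : ℕ × ℕ × ℕ → ℝ) (ρ : ℝ) (hρ : 0 ≤ ρ)
    (hf1 : ∀ x, PP n x → 1 ≤ f x)
    (hf : ∀ x, PP n x → NC n x → ∑ y ∈ Nb x, usdStep n p x y * f y ≤ ρ * f x) (k : ℕ) :
    ∀ (t : ℕ) (s : ℕ → ℕ × ℕ × ℕ), PP n (s t) → NC n (s t) →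
      μ.real (cyl t s ∩ {ω | ∀ i ≤ k, NC n (ω (t + i))}) ≤ ρ ^ k * f (s t) * μ.real (cyl t s) := by
  have := hμ.1
  induction k with
  | zero =>
    intro t s hP hN
    have h1 : μ.real (cyl t s ∩ {ω | ∀ i ≤ 0, NC n (ω (t + i))}) ≤ μ.real (cyl t s) :=
      measureReal_mono Set.inter_subset_left
    have h2 := hf1 _ hP
    have h3 : 0 ≤ μ.real (cyl t s) := measureReal_nonneg
    nlinarith
  | succ k ih =>
    intro t s hP hN
    set x := s t with hx
    let A : ℕ × ℕ × ℕ → Set (ℕ → ℕ × ℕ × ℕ) := fun y =>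
      cyl (t + 1) (Function.update s (t + 1) y) ∩ {ω | ∀ i ≤ k, NC n (ω (t + 1 + i))}
    let Z : Set (ℕ → ℕ × ℕ × ℕ) := ⋃ y : {y // y ∉ Nb x}, cyl (t + 1) (Function.update s (t + 1) y)
    have hsub : cyl t s ∩ {ω | ∀ i ≤ k + 1, NC n (ω (t + i))} ⊆ (⋃ y ∈ Nb x, A y) ∪ Z := by
      rintro ω ⟨h1, h2⟩
      have hc : ω ∈ cyl (t + 1) (Function.update s (t + 1) (ω (t + 1))) := by
        intro i hi
        rcases Nat.lt_or_ge t i with h | h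
        · have : i = t + 1 := by omega
          subst this; simp
        · rw [Function.update_of_ne (by omega)]; exact h1 i h
      by_cases hy : ω (t + 1) ∈ Nb x
      · left
        refine Set.mem_biUnion hy ⟨hc, ?_⟩
        intro i hi
        have := h2 (1 + i) (by omega)
        rwa [← add_assoc] at this
      · right
        exact Set.mem_iUnion.mpr ⟨⟨_, hy⟩, hc⟩
    have hZ : μ.real Z = 0 := by
      have : μ Z = 0 := by
        refine measure_iUnion_null (fun y => ?_)
        have := cyl_succ n p x0 μ hμ t s y
        rw [usdStep_eq_zero n p _ _ y.2, mul_zero] at this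
        exact (measureReal_eq_zero_iff).mp this
      simp [Measure.real, this]
    have hA : ∀ y ∈ Nb x, μ.real (A y) ≤ ρ ^ k * f y * (μ.real (cyl t s) * usdStep n p x y) := by
      intro y _
      have hcs := cyl_succ n p x0 μ hμ t s y
      rw [← hx] at hcs
      by_cases h0 : usdStep n p x y = 0
      · rw [h0, mul_zero] at hcs
        rw [h0, mul_zero, mul_zero, ← hcs]
        exact measureReal_mono Set.inter_subset_left
      · have hPy := usdStep_PP n p x y hP h0
        rw [← hcs]
        by_cases hNy : NC n y
        · have := ih (t + 1) (Function.update s (t + 1) y) (by simpa using hPy) (by simpa using hNy)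
          simpa using this
        · have : A y = ∅ := by
            rw [Set.eq_empty_iff_forall_notMem]
            rintro ω ⟨h1, h2⟩
            have h3 := h1 (t + 1) le_rfl
            rw [Function.update_self] at h3
            have h4 := h2 0 (Nat.zero_le _)
            rw [add_zero, h3] at h4
            exact hNy h4
          rw [this, measureReal_empty]
          have := hf1 y hPy
          have : 0 ≤ f y := by linarith
          have h5 : 0 ≤ μ.real (cyl (t + 1) (Function.update s (t + 1) y)) := measureReal_nonneg
          positivity
    calc μ.real (cyl t s ∩ {ω | ∀ i ≤ k + 1, NC n (ω (t + i))})
        ≤ μ.real ((⋃ y ∈ Nb x, A y) ∪ Z) := measureReal_mono hsub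
      _ ≤ μ.real (⋃ y ∈ Nb x, A y) + μ.real Z := measureReal_union_le _ _
      _ ≤ ∑ y ∈ Nb x, μ.real (A y) + 0 := by
          rw [hZ]; gcongr; exact measureReal_biUnion_finset_le _ _
      _ ≤ ∑ y ∈ Nb x, ρ ^ k * f y * (μ.real (cyl t s) * usdStep n p x y) := by
          rw [add_zero]; exact Finset.sum_le_sum hA
      _ = ρ ^ k * μ.real (cyl t s) * ∑ y ∈ Nb x, usdStep n p x y * f y := by
          rw [Finset.mul_sum]; apply Finset.sum_congr rfl; intros; ring
      _ ≤ ρ ^ k * μ.real (cyl t s) * (ρ * f x) := by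
          gcongr; exact hf x hP hN
      _ = _ := by ring

lemma survive (n : ℕ) (p : ℝ) (x0 : ℕ × ℕ × ℕ) (μ : Measure (ℕ → ℕ × ℕ × ℕ))
    (hμ : IsUSD n p x0 μ) (f : ℕ × ℕ × ℕ → ℝ) (ρ : ℝ) (hρ : 0 ≤ ρ)
    (hf1 : ∀ x, PP n x → 1 ≤ f x)
    (hf : ∀ x, PP n x → NC n x → ∑ y ∈ Nb x, usdStep n p x y * f y ≤ ρ * f x)
    (hP : PP n x0) (hN : NC n x0) (k : ℕ) :
    μ.real {ω | ∀ i ≤ k, NC n (ω i)} ≤ ρ ^ k * f x0 := by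
  have := hμ.1
  have hc := chain n p x0 μ hμ f ρ hρ hf1 hf k 0 (fun _ => x0) hP hN
  let Z : Set (ℕ → ℕ × ℕ × ℕ) := ⋃ y : {y // y ≠ x0}, cyl 0 (fun _ => y)
  have hZ : μ.real Z = 0 := by
    have : μ Z = 0 := by
      refine measure_iUnion_null (fun y => ?_)
      have := hμ.2 0 (fun _ => y)
      rw [if_neg y.2, zero_mul] at this
      exact (measureReal_eq_zero_iff).mp this
    simp [Measure.real, this]
  have hsub : {ω | ∀ i ≤ k, NC n (ω i)} ⊆
      (cyl 0 (fun _ => x0) ∩ {ω | ∀ i ≤ k, NC n (ω (0 + i))}) ∪ Z := by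
    intro ω h
    by_cases h0 : ω 0 = x0
    · left
      refine ⟨fun i hi => ?_, fun i hi => by rw [zero_add]; exact h i hi⟩
      have : i = 0 := by omega
      subst this; exact h0
    · right
      refine Set.mem_iUnion.mpr ⟨⟨_, h0⟩, fun i hi => ?_⟩
      have : i = 0 := by omega
      subst this; rfl
  have h1 : μ.real (cyl 0 (fun _ => x0)) ≤ 1 := measureReal_le_one
  have h2 : 0 ≤ ρ ^ k * f x0 := by
    have := hf1 x0 hP
    have : 0 ≤ f x0 := by linarith
    positivity
  calc _ ≤ _ := measureReal_mono hsub
    _ ≤ _ := measureReal_union_le _ _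
    _ ≤ ρ ^ k * f x0 * μ.real (cyl 0 (fun _ => x0)) := by rw [hZ, add_zero]; exact hc
    _ ≤ _ := mul_le_of_le_one_right h2 h1

/-- For constants `ε, p ∈ (0,1]`, there are constants `c, C > 0`
(depending only on `ε` and `p`) such that for any configuration `x0 = (x₁, x₂, u)` with
`x₁ ∈ [ε·n, x₂]`, `u ≤ n/2` and `|p - p_s| ≤ c·√(log n / n)` where `p_s = 1 - x₁/x₂`,
the chain `USD_p` started from `x0` reaches consensus (`X₁ = n` or `X₂ = n`) within
`C·n·log² n` steps with probability at least `1 - C·n⁻¹`. -/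
theorem stmt_2 (ε p : ℝ) (hε : ε ∈ Set.Ioc (0 : ℝ) 1) (hp : p ∈ Set.Ioc (0 : ℝ) 1) :
    ∃ c C : ℝ, 0 < c ∧ 0 < C ∧
      ∀ (n : ℕ), 2 ≤ n →
      ∀ x0 : ℕ × ℕ × ℕ, x0.1 + x0.2.1 + x0.2.2 = n →
        ε * (n : ℝ) ≤ (x0.1 : ℝ) → x0.1 ≤ x0.2.1 → (x0.2.2 : ℝ) ≤ (n : ℝ) / 2 →
        |p - (1 - (x0.1 : ℝ) / (x0.2.1 : ℝ))| ≤ c * Real.sqrt (Real.log n / n) →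
        ∀ μ : Measure (ℕ → ℕ × ℕ × ℕ), IsUSD n p x0 μ →
          1 - C * (n : ℝ)⁻¹ ≤
            (μ {ω | ∃ t : ℕ, (t : ℝ) ≤ C * n * (Real.log n) ^ 2 ∧
                  ((ω t).1 = n ∨ (ω t).2.1 = n)}).toReal := by
  have hp0 := hp.1
  have hε0 := hε.1
  rcases eq_or_lt_of_le hp.2 with hp1 | hp1
  · -- `p = 1`: the hypothesis is vacuous
    refine ⟨ε / 2, 1, by linarith, one_pos, ?_⟩
    intro n hn x0 hs h1 h2 _ h4
    exfalso
    have hn0 : (0 : ℝ) < n := by exact_mod_cast (by omega : 0 < n)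
    have hx1 : (0 : ℝ) < x0.1 := lt_of_lt_of_le (by positivity) h1
    have hx2 : (0 : ℝ) < x0.2.1 := lt_of_lt_of_le hx1 (by exact_mod_cast h2)
    have hx2n : (x0.2.1 : ℝ) ≤ n := by exact_mod_cast (by omega : x0.2.1 ≤ n)
    have hr : ε ≤ (x0.1 : ℝ) / x0.2.1 := by
      rw [le_div_iff₀ hx2]; nlinarith
    have hl : Real.sqrt (Real.log n / n) ≤ 1 := by
      rw [Real.sqrt_le_one, div_le_one hn0]
      have := Real.log_le_sub_one_of_pos hn0
      linarith
    have := (le_abs_self _).trans h4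
    rw [hp1] at this
    nlinarith
  obtain ⟨c0, M, hc0, hM, hpot⟩ := pot (1 - p) (by linarith) (by linarith)
  -- make c1 ≤ M/2, c1 ≤ c0
  obtain ⟨c1, hc1⟩ : ∃ c1, c1 = min c0 (M / 2) := ⟨_, rfl⟩
  have hc1p : 0 < c1 := by rw [hc1]; positivity
  have hc1a : c1 ≤ c0 := by rw [hc1]; exact min_le_left _ _
  have hc1b : c1 ≤ M / 2 := by rw [hc1]; exact min_le_right _ _
  refine ⟨1, 2 * M / c1 + 3 * M, one_pos, by positivity, ?_⟩
  intro n hn x0 hs h1 h2 _ _ μ hμ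
  have := hμ.1
  obtain ⟨C, hC⟩ : ∃ C, C = 2 * M / c1 + 3 * M := ⟨_, rfl⟩
  rw [← hC]
  have hn2 : (2 : ℝ) ≤ n := by exact_mod_cast hn
  have hn0 : (0 : ℝ) < n := by linarith
  obtain ⟨U, hU1, hU2⟩ := hpot n hn2
  have hln : 1 / 2 ≤ Real.log n :=
    le_trans (by have := Real.log_two_gt_d9; linarith) (Real.log_le_log (by norm_num) hn2)
  have hx1 : 0 < x0.1 := by
    have : (0 : ℝ) < x0.1 := lt_of_lt_of_le (by positivity) h1
    exact_mod_cast this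
  have hP : PP n x0 := ⟨hs, by omega⟩
  have hN : NC n x0 := by unfold NC; omega
  have hb : ∀ x, PP n x → 1 ≤ U x.1 x.2.1 x.2.2 ∧ U x.1 x.2.1 x.2.2 ≤ M * Real.log n := by
    intro x hx
    exact hU1 _ _ _ (by positivity) (by positivity) (by positivity) (by exact_mod_cast hx.1)
      (by exact_mod_cast hx.2)
  obtain ⟨δ, hδ⟩ : ∃ δ, δ = c1 / (n * (M * Real.log n)) := ⟨_, rfl⟩
  have hML : 0 < M * Real.log n := by positivity
  have hδ0 : 0 < δ := by rw [hδ]; positivity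
  have hδ1 : δ ≤ 1 := by
    rw [hδ, div_le_one (by positivity)]
    nlinarith
  have hf : ∀ x, PP n x → NC n x →
      ∑ y ∈ Nb x, usdStep n p x y * (fun y : ℕ × ℕ × ℕ => U y.1 y.2.1 y.2.2) y
        ≤ (1 - δ) * (fun y : ℕ × ℕ × ℕ => U y.1 y.2.1 y.2.2) x := by
    intro x hx hxn
    refine (usd_drift n hn p c0 U hU2 x hx hxn).trans ?_
    have h := (hb x hx).2
    have : δ * U x.1 x.2.1 x.2.2 ≤ c0 / n := by
      calc δ * U x.1 x.2.1 x.2.2 ≤ δ * (M * Real.log n) := by gcongr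
        _ = c1 / n := by rw [hδ]; field_simp
        _ ≤ _ := by gcongr
    simp only
    linarith
  obtain ⟨k, hk⟩ : ∃ k, k = ⌊C * n * (Real.log n) ^ 2⌋₊ := ⟨_, rfl⟩
  have hsv := survive n p x0 μ hμ (fun y => U y.1 y.2.1 y.2.2) (1 - δ) (by linarith)
    (fun x hx => (hb x hx).1) hf hP hN k
  have hC0 : 0 < C := by rw [hC]; positivity
  have hkle : (k : ℝ) ≤ C * n * (Real.log n) ^ 2 := by rw [hk]; exact Nat.floor_le (by positivity)
  have hkgt : C * n * (Real.log n) ^ 2 - 1 ≤ k := by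
    have := Nat.lt_floor_add_one (C * n * (Real.log n) ^ 2)
    rw [← hk] at this; linarith
  have hexp : (1 - δ) ^ k ≤ 3 * ((n : ℝ)⁻¹) ^ 2 := by
    calc (1 - δ) ^ k ≤ (Real.exp (-δ)) ^ k := by
          refine pow_le_pow_left₀ (by linarith) ?_ k
          have := Real.add_one_le_exp (-δ)
          linarith
      _ = Real.exp (-(δ * k)) := by rw [← Real.exp_nat_mul]; ring_nf
      _ ≤ Real.exp (1 + (-(2 * Real.log n))) := by
          apply Real.exp_le_exp.mpr
          have h3 : δ * (C * n * (Real.log n) ^ 2 - 1) ≤ δ * k := by gcongr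
          have h4 : δ * (C * n * (Real.log n) ^ 2) = c1 * C / M * Real.log n := by
            rw [hδ]; field_simp
          have h5 : 2 ≤ c1 * C / M := by
            rw [le_div_iff₀ hM, hC, mul_add]
            have : c1 * (2 * M / c1) = 2 * M := by field_simp
            rw [this]
            have : 0 ≤ c1 * (3 * M) := by positivity
            linarith
          have h6 : 2 * Real.log n ≤ c1 * C / M * Real.log n := by gcongr
          linarith
      _ = Real.exp 1 * ((n : ℝ)⁻¹) ^ 2 := by
          rw [Real.exp_add]
          congr 1
          rw [show -(2 * Real.log n) = ((2 : ℕ) : ℝ) * (-Real.log n) by push_cast; ring,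
            Real.exp_nat_mul, Real.exp_neg, Real.exp_log hn0]
      _ ≤ _ := by
          gcongr
          have := Real.exp_one_lt_d9
          linarith
  have hbad : μ.real {ω | ∀ i ≤ k, NC n (ω i)} ≤ C * (n : ℝ)⁻¹ := by
    refine hsv.trans ?_
    have hU := (hb x0 hP).2
    have hU' := (hb x0 hP).1
    have hlogn : Real.log n ≤ n := by have := Real.log_le_sub_one_of_pos hn0; linarith
    calc (1 - δ) ^ k * U x0.1 x0.2.1 x0.2.2 ≤ (3 * ((n : ℝ)⁻¹) ^ 2) * (M * n) := by
          apply mul_le_mul hexp (hU.trans (by gcongr)) (by linarith) (by positivity)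
      _ = 3 * M * (n : ℝ)⁻¹ := by field_simp
      _ ≤ _ := by
          gcongr
          rw [hC]
          have : 0 ≤ 2 * M / c1 := by positivity
          linarith
  have hcover : (Set.univ : Set (ℕ → ℕ × ℕ × ℕ)) ⊆
      {ω | ∃ t : ℕ, (t : ℝ) ≤ C * n * (Real.log n) ^ 2 ∧ ((ω t).1 = n ∨ (ω t).2.1 = n)} ∪
      {ω | ∀ i ≤ k, NC n (ω i)} := by
    intro ω _
    by_cases h : ∀ i ≤ k, NC n (ω i)
    · right; exact h
    · left
      push Not at h
      obtain ⟨i, hi, hni⟩ := h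
      refine ⟨i, le_trans (by exact_mod_cast hi) hkle, ?_⟩
      exact not_not.mp hni
  have hone : μ.real Set.univ = 1 := probReal_univ
  have := (measureReal_mono (μ := μ) hcover).trans (measureReal_union_le _ _)
  rw [hone] at this
  have goal' : 1 - C * (n : ℝ)⁻¹ ≤ μ.real {ω | ∃ t : ℕ, (t : ℝ) ≤ C * n * (Real.log n) ^ 2 ∧ ((ω t).1 = n ∨ (ω t).2.1 = n)} := by
    linarith
  exact goal'
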